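/- Let f be defined on a domain D ⊆ ℝⁿ with f : D → D, let X ⊆ D be a compact set with X₀ = X, and suppose the system is δ-UB on D, i.e. there is a class K function α with d(fᵏ(x), fᵏ(x')) ≤ α(d(x,x')) for all x, x' ∈ D and k ≥ 1. Assume X is transient: there exists τ ∈ ℕ such that for every x ∈ X there is q ≤ τ with f^q(x) ∉ X. Then for every continuous resolution function ε : X × X → ℝ_{>0}, with resolution relation R̄ = {(x,x̂) ∈ X × X : d(x,x̂) ≤ ε(x,x̂)}, there exist a finite-state deterministic abstraction Ŝ (with abstract states in X and transition consistency imposed for pairs whose successors remain in X) and a relation R ⊆ X × X̂ which is a multi-resolution approximate bisimulation between S and Ŝ with resolution R̄; that is, 𝒲_S(R̄) ≠ ∅. -/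

import Mathlib

/-- A function `α : ℝ≥0 → ℝ≥0` is of class 𝒦 if it is continuous, strictly increasing and
`α 0 = 0`. -/
def IsClassK (α : ℝ → ℝ) : Prop :=
  ContinuousOn α (Set.Ici 0) ∧ StrictMonoOn α (Set.Ici 0) ∧ α 0 = 0

/-!
By compactness and equicontinuity, `X` splits into finitely many cells such that orbits starting
in a common cell stay within `min ε` of each other forever. In each cell choose as representative
a point that remains in `X` for as long as possible; transience guarantees that the longest stay
is attained. The abstract states are the points visited by the representatives before they leave
`X`. Relate the `k`-th iterate of `x` to the `k`-th iterate of its representative for as long as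
`x` remains in `X`: since the representative stays at least as long, the relation survives every
step that keeps the concrete state in `X`.
-/

open Set Filter Topology Uniformity

section Selection

variable {E ι : Type*} {S : ℕ → Set E} {N : ℕ}

theorem exists_mem_forall_nonempty_inter_imp_mem (hS : Antitone S) (hN : S N = ∅) {C : Set E}
    (hC : C.Nonempty) : ∃ a ∈ C, ∀ k, (C ∩ S k).Nonempty → a ∈ S k := by
  set T : Set ℕ := {k | (C ∩ S k).Nonempty}
  rcases T.eq_empty_or_nonempty with hT | hT
  · obtain ⟨a, ha⟩ := hC
    exact ⟨a, ha, fun k hk => (hT.subset hk : k ∈ (∅ : Set ℕ)).elim⟩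
  · have hbdd : BddAbove T := by
      refine ⟨N, fun k ⟨x, _, hxk⟩ => le_of_not_gt fun hNk => ?_⟩
      exact (hN.subset (hS hNk.le hxk) : x ∈ (∅ : Set E))
    obtain ⟨a, haC, haS⟩ := Nat.sSup_mem hT hbdd
    exact ⟨a, haC, fun k hk => hS (le_csSup hbdd hk) haS⟩

theorem exists_factorsThrough_mapsTo (hS : Antitone S) (hN : S N = ∅) (c : E → ι) :
    ∃ r : E → E, (∀ x, c (r x) = c x) ∧ r.FactorsThrough c ∧ ∀ k, MapsTo r (S k) (S k) := by
  have hcell (i : range c) : ∃ a ∈ c ⁻¹' {i.1}, ∀ k, (c ⁻¹' {i.1} ∩ S k).Nonempty → a ∈ S k :=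
    exists_mem_forall_nonempty_inter_imp_mem hS hN i.2
  choose s hsc hsS using hcell
  exact ⟨s ∘ rangeFactorization c, fun x => hsc _, fun x y hxy => congrArg s (Subtype.ext hxy),
    fun k x hx => hsS _ k ⟨x, rfl, hx⟩⟩

theorem exists_finite_image_retraction [UniformSpace E] {X : Set E} (hX : TotallyBounded X)
    {V : SetRel E E} (hV : V ∈ 𝓤 E) (hS : Antitone S) (hN : S N = ∅) :
    ∃ r : E → E, (∀ x, r (r x) = r x) ∧ (∀ k, MapsTo r (S k) (S k)) ∧ (r '' X).Finite ∧
      ∀ x ∈ X, r x ∈ X → (x, r x) ∈ V := by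
  obtain ⟨U, hU, hUsymm, hUV⟩ := comp_symm_mem_uniformity_sets hV
  obtain ⟨t, ht, hXt⟩ := hX U hU
  have hcenter (x : E) : ∃ z, x ∈ X → z ∈ t ∧ (x, z) ∈ U := by
    by_cases hx : x ∈ X
    · obtain ⟨z, hz, hxz⟩ := mem_iUnion₂.1 (hXt hx)
      exact ⟨z, fun _ => ⟨hz, hxz⟩⟩
    · exact ⟨x, fun h => absurd h hx⟩
  choose c hc using hcenter
  obtain ⟨r, hcr, hrc, hrS⟩ := exists_factorsThrough_mapsTo hS hN c
  refine ⟨r, fun x => hrc (hcr x), hrS, ?_, fun x hx hrx => hUV ⟨c x, (hc x hx).2, ?_⟩⟩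
  · have hmaps : MapsTo c (r '' X) t := by
      rintro _ ⟨x, hx, rfl⟩
      exact (hcr x).symm ▸ (hc x hx).1
    have hinj : InjOn c (r '' X) := by
      rintro _ ⟨x, -, rfl⟩ _ ⟨y, -, rfl⟩ hxy
      exact hrc (by rwa [hcr, hcr] at hxy)
    exact .of_injOn hmaps hinj ht
  · exact hcr x ▸ hUsymm.symm _ _ (hc (r x) hrx).2

theorem exists_mapsTo_eqOn_id {r : E → E} {X Y : Set E} (hr : MapsTo r X Y) :
    ∃ κ : E → E, MapsTo κ X Y ∧ EqOn κ id Y := by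
  classical
  refine ⟨Y.piecewise id r, fun x hx => ?_, piecewise_eqOn Y id r⟩
  by_cases hxY : x ∈ Y
  · rwa [piecewise_eq_of_mem Y id r hxY]
  · rw [piecewise_eq_of_notMem Y id r hxY]
    exact hr hx

end Selection

section Orbits

variable {E : Type*} {f r : E → E} {X A : Set E} {N : ℕ}

/-- The points whose orbit under `f` stays in `X` from time `0` through time `k`, included. -/
def survivors (f : E → E) (X : Set E) (k : ℕ) : Set E :=
  {x | ∀ j ≤ k, f^[j] x ∈ X}

theorem survivors_antitone : Antitone (survivors f X) :=
  fun _ _ hkl _ hx j hj => hx j (hj.trans hkl)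

theorem survivors_zero : survivors f X 0 = X := by
  ext x
  simp [survivors]

theorem survivors_eq_empty (h : ∀ x ∈ X, ∃ q ≤ N, f^[q] x ∉ X) : survivors f X N = ∅ := by
  refine eq_empty_of_forall_notMem fun x hx => ?_
  obtain ⟨q, hq, hxq⟩ := h x (hx 0 N.zero_le)
  exact hxq (hx q hq)

theorem mem_survivors_succ {x : E} {k : ℕ} (hx : x ∈ survivors f X k) (hfx : f (f^[k] x) ∈ X) :
    x ∈ survivors f X (k + 1) := by
  intro j hj
  rcases Nat.le_succ_iff.1 hj with hjk | rfl
  · exact hx j hjk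
  · rwa [Function.iterate_succ_apply']

/-- The initial orbit segments of the points of `A`, each followed until it first leaves `X`. They
form the state space of the abstraction whose representatives are the points of `A`. -/
def orbitSegments (f : E → E) (X A : Set E) : Set E :=
  ⋃ k, f^[k] '' (A ∩ survivors f X k)

theorem orbitSegments_subset : orbitSegments f X A ⊆ X := by
  refine iUnion_subset fun k => ?_
  rintro _ ⟨a, ⟨-, ha⟩, rfl⟩
  exact ha k le_rfl

theorem apply_mem_orbitSegments {y : E} (hy : y ∈ orbitSegments f X A) (hfy : f y ∈ X) :
    f y ∈ orbitSegments f X A := by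
  obtain ⟨k, a, ⟨haA, hak⟩, rfl⟩ := mem_iUnion.1 hy
  exact mem_iUnion.2 ⟨k + 1, a, ⟨haA, mem_survivors_succ hak hfy⟩,
    Function.iterate_succ_apply' f k a⟩

theorem finite_orbitSegments (hA : A.Finite) (hN : survivors f X N = ∅) :
    (orbitSegments f X A).Finite := by
  refine ((finite_Iio N).biUnion fun k _ => hA.image f^[k]).subset (iUnion_subset fun k => ?_)
  rintro _ ⟨a, ⟨haA, hak⟩, rfl⟩
  have hkN : k < N := lt_of_not_ge fun hNk => hN.subset (survivors_antitone hNk hak)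
  exact mem_biUnion hkN (mem_image_of_mem _ haA)

/-- The relation that follows the orbits of `x` and of its representative `r x` simultaneously,
for as long as the orbit of `x` stays in `X`. It is the bisimulation between the system and its
abstraction. -/
def orbitCoupling (f : E → E) (X : Set E) (r : E → E) : Set (E × E) :=
  {p | ∃ k, ∃ x ∈ survivors f X k, (f^[k] x, f^[k] (r x)) = p}

theorem mk_mem_orbitCoupling {x : E} (hx : x ∈ X) : (x, r x) ∈ orbitCoupling f X r :=
  ⟨0, x, survivors_zero.superset hx, rfl⟩

theorem map_mem_orbitCoupling {p : E × E} (hp : p ∈ orbitCoupling f X r) (hfp : f p.1 ∈ X) :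
    (f p.1, f p.2) ∈ orbitCoupling f X r := by
  obtain ⟨k, x, hx, rfl⟩ := hp
  exact ⟨k + 1, x, mem_survivors_succ hx hfp, by simp only [Function.iterate_succ_apply']⟩

theorem diag_mem_orbitCoupling (hr : ∀ x, r (r x) = r x) {y : E}
    (hy : y ∈ orbitSegments f X (r '' X)) : (y, y) ∈ orbitCoupling f X r := by
  obtain ⟨k, _, ⟨⟨x, -, rfl⟩, hk⟩, rfl⟩ := mem_iUnion.1 hy
  exact ⟨k, r x, hk, by rw [hr]⟩

theorem orbitCoupling_subset_prod (hr : ∀ k, MapsTo r (survivors f X k) (survivors f X k)) :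
    orbitCoupling f X r ⊆ X ×ˢ orbitSegments f X (r '' X) := by
  rintro _ ⟨k, x, hx, rfl⟩
  exact ⟨hx k le_rfl,
    mem_iUnion.2 ⟨k, r x, ⟨mem_image_of_mem r (hx 0 k.zero_le), hr k hx⟩, rfl⟩⟩

end Orbits

section Equicontinuity

theorem uniformEquicontinuousOn_of_equicontinuousOn {ι α β : Type*} [UniformSpace α]
    [UniformSpace β] {F : ι → β → α} {K : Set β} (hK : IsCompact K) (hF : EquicontinuousOn F K) :
    UniformEquicontinuousOn F K := by
  have := isCompact_iff_compactSpace.1 hK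
  rw [← uniformEquicontinuous_restrict_iff]
  exact CompactSpace.uniformEquicontinuous_of_equicontinuous
    ((equicontinuous_restrict_iff F).2 hF)

theorem uniformEquicontinuousOn_of_continuity_modulus {ι α β : Type*} [PseudoMetricSpace α]
    [PseudoMetricSpace β] {ω : ℝ → ℝ} (hω : Tendsto ω (𝓝[≥] 0) (𝓝 0)) {F : ι → β → α} {S : Set β}
    (h : ∀ x ∈ S, ∀ y ∈ S, ∀ i, dist (F i x) (F i y) ≤ ω (dist x y)) :
    UniformEquicontinuousOn F S := by
  have hdist : Tendsto (fun p : β × β => dist p.1 p.2) (𝓤 β ⊓ 𝓟 (S ×ˢ S)) (𝓝[≥] 0) := by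
    refine tendsto_nhdsWithin_iff.2 ⟨?_, .of_forall fun _ => dist_nonneg⟩
    rw [Metric.uniformity_eq_comap_nhds_zero]
    exact tendsto_comap.mono_left inf_le_left
  intro V hV
  obtain ⟨e, he, heV⟩ := Metric.mem_uniformity_dist.1 hV
  filter_upwards [(hω.comp hdist).eventually_lt_const he, mem_inf_of_right (mem_principal_self _)]
    with p hpe hpS i
  exact heV ((h _ hpS.1 _ hpS.2 i).trans_lt hpe)

theorem IsClassK.tendsto_zero {α : ℝ → ℝ} (hα : IsClassK α) : Tendsto α (𝓝[≥] 0) (𝓝 0) := by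
  have h : Tendsto α (𝓝[≥] 0) (𝓝 (α 0)) := hα.1 0 self_mem_Ici
  rwa [hα.2.2] at h

theorem uniformEquicontinuousOn_iterate_of_continuity_modulus {E : Type*} [PseudoMetricSpace E]
    {f : E → E} {S : Set E} {ω : ℝ → ℝ} (hω : Tendsto ω (𝓝[≥] 0) (𝓝 0))
    (h : ∀ x ∈ S, ∀ y ∈ S, ∀ k, 1 ≤ k → dist (f^[k] x) (f^[k] y) ≤ ω (dist x y)) :
    UniformEquicontinuousOn (fun k => f^[k]) S := by
  -- `ω` need not dominate the identity, which is the bound required at time `0`.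
  have hmax : Tendsto (fun t => max t (ω t)) (𝓝[≥] 0) (𝓝 0) := by
    have hid : Tendsto id (𝓝[≥] (0 : ℝ)) (𝓝 0) := tendsto_id.mono_right nhdsWithin_le_nhds
    simpa only [max_self, id] using hid.max hω
  refine uniformEquicontinuousOn_of_continuity_modulus hmax fun x hx y hy k => ?_
  rcases k.eq_zero_or_pos with rfl | hk
  · exact le_max_left _ _
  · exact (h x hx y hy k hk).trans (le_max_right _ _)

end Equicontinuity

theorem exists_retraction_orbitCoupling_subset {E : Type*} [UniformSpace E] {X : Set E}
    {f : E → E} {N : ℕ} (hX : TotallyBounded X)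
    (hf : UniformEquicontinuousOn (fun k => f^[k]) X) (hN : survivors f X N = ∅)
    {V : SetRel E E} (hV : V ∈ 𝓤 E) :
    ∃ r : E → E, (∀ x, r (r x) = r x) ∧ (∀ k, MapsTo r (survivors f X k) (survivors f X k)) ∧
      (r '' X).Finite ∧ orbitCoupling f X r ⊆ V := by
  have hclose := eventually_inf_principal.1 (hf V hV)
  obtain ⟨r, hidem, hsurv, hfin, hnear⟩ :=
    exists_finite_image_retraction hX hclose survivors_antitone hN
  refine ⟨r, hidem, hsurv, hfin, ?_⟩
  rintro _ ⟨k, x, hx, rfl⟩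
  have hxX : x ∈ X := hx 0 k.zero_le
  have hrX : r x ∈ X := hsurv k hx 0 k.zero_le
  exact hnear x hxX hrX ⟨hxX, hrX⟩ k

theorem stmt8_general {E : Type*} [PseudoMetricSpace E] {X : Set E} {f : E → E}
    (hX : IsCompact X) (hf : EquicontinuousOn (fun k => f^[k]) X)
    {τ : ℕ} (htrans : ∀ x ∈ X, ∃ q ≤ τ, f^[q] x ∉ X)
    {ε : E → E → ℝ} (hεpos : ∀ x ∈ X, ∀ y ∈ X, 0 < ε x y)
    (hεcont : ContinuousOn (fun p : E × E => ε p.1 p.2) (X ×ˢ X)) :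
    ∃ Xhat : Set E, Xhat ⊆ X ∧ Xhat.Finite ∧
      ∃ κ : E → E, (∀ x ∈ X, κ x ∈ Xhat) ∧ (∀ y ∈ Xhat, ∃ x ∈ X, κ x = y) ∧
        ∃ ghat : E → E, (∀ y ∈ Xhat, f y ∈ X → ghat y = κ (f y)) ∧
          ∃ R : Set (E × E),
            R ⊆ X ×ˢ Xhat ∧
            (∀ x ∈ X, ∃ y ∈ κ '' X, (x, y) ∈ R) ∧
            (∀ y ∈ κ '' X, ∃ x ∈ X, (x, y) ∈ R) ∧
            (∀ p ∈ R, f p.1 ∈ X → (f p.1, ghat p.2) ∈ R) ∧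
            (∀ p ∈ R, dist p.1 p.2 ≤ ε p.1 p.2) := by
  have hN : survivors f X τ = ∅ := survivors_eq_empty htrans
  obtain ⟨e, he, hle⟩ := (hX.prod hX).exists_forall_le' hεcont fun p hp => hεpos _ hp.1 _ hp.2
  obtain ⟨r, hidem, hsurv, hfin, hnear⟩ := exists_retraction_orbitCoupling_subset
    hX.totallyBounded (uniformEquicontinuousOn_of_equicontinuousOn hX hf) hN
    (Metric.dist_mem_uniformity he)
  set Y := orbitSegments f X (r '' X)
  have hYX : Y ⊆ X := orbitSegments_subset
  have hR : orbitCoupling f X r ⊆ X ×ˢ Y := orbitCoupling_subset_prod hsurv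
  have hrY : MapsTo r X Y := fun x hx => (hR (mk_mem_orbitCoupling hx)).2
  obtain ⟨κ, hκX, hκY⟩ := exists_mapsTo_eqOn_id hrY
  refine ⟨Y, hYX, finite_orbitSegments hfin hN, κ, hκX, fun y hy => ⟨y, hYX hy, hκY hy⟩,
    f, fun y hy hfy => (hκY (apply_mem_orbitSegments hy hfy)).symm,
    orbitCoupling f X r, hR, fun x hx => ?_, ?_, fun p => map_mem_orbitCoupling,
    fun p hp => ?_⟩
  · exact ⟨r x, ⟨r x, hYX (hrY hx), hκY (hrY hx)⟩, mk_mem_orbitCoupling hx⟩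
  · rintro _ ⟨x, hx, rfl⟩
    exact ⟨κ x, hYX (hκX hx), diag_mem_orbitCoupling hidem (hκX hx)⟩
  · obtain ⟨hp₁, hp₂⟩ := hR hp
    exact (hnear hp).le.trans (hle p ⟨hp₁, hYX hp₂⟩)

/-- Let `f : D → D` on a domain `D ⊆ ℝⁿ`, let `X ⊆ D` be compact with `X₀ = X`,
and suppose the system is δ-UB on `D`.  Assume `X` is transient: there is `τ ∈ ℕ` such that
every `x ∈ X` leaves `X` within `τ` steps.  Then for every continuous positive resolution
function `ε`, with resolution relation `R̄ = {(x,x̂) ∈ X × X : dist x x̂ ≤ ε x x̂}`, there exist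
a finite-state deterministic abstraction `Ŝ` (abstract states in `X`, transition consistency
imposed for pairs whose successors remain in `X`) and a relation `R ⊆ X × X̂` that is a
multi-resolution approximate bisimulation with resolution `R̄`; i.e. `𝒲_S(R̄) ≠ ∅`. -/
theorem stmt8 (n : ℕ)
    (D X : Set (EuclideanSpace ℝ (Fin n)))
    (f : EuclideanSpace ℝ (Fin n) → EuclideanSpace ℝ (Fin n))
    (hfD : Set.MapsTo f D D) (hXD : X ⊆ D)
    (hXcomp : IsCompact X) (hXne : X.Nonempty)
    (α : ℝ → ℝ) (hα : IsClassK α)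
    (hUB : ∀ x ∈ D, ∀ x' ∈ D, ∀ k : ℕ, 1 ≤ k →
      dist (f^[k] x) (f^[k] x') ≤ α (dist x x'))
    (τ : ℕ) (htrans : ∀ x ∈ X, ∃ q : ℕ, q ≤ τ ∧ f^[q] x ∉ X)
    (ε : EuclideanSpace ℝ (Fin n) → EuclideanSpace ℝ (Fin n) → ℝ)
    (hεpos : ∀ x ∈ X, ∀ y ∈ X, 0 < ε x y)
    (hεcont : ContinuousOn (fun p : EuclideanSpace ℝ (Fin n) × EuclideanSpace ℝ (Fin n) =>
      ε p.1 p.2) (X ×ˢ X)) :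
    ∃ Xhat : Set (EuclideanSpace ℝ (Fin n)), Xhat ⊆ X ∧ Xhat.Finite ∧
      ∃ κ : EuclideanSpace ℝ (Fin n) → EuclideanSpace ℝ (Fin n),
        (∀ x ∈ X, κ x ∈ Xhat) ∧ (∀ y ∈ Xhat, ∃ x ∈ X, κ x = y) ∧
        ∃ ghat : EuclideanSpace ℝ (Fin n) → EuclideanSpace ℝ (Fin n),
          (∀ y ∈ Xhat, f y ∈ X → ghat y = κ (f y)) ∧
          ∃ R : Set (EuclideanSpace ℝ (Fin n) × EuclideanSpace ℝ (Fin n)),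
            R ⊆ X ×ˢ Xhat ∧
            (∀ x ∈ X, ∃ y ∈ κ '' X, (x, y) ∈ R) ∧
            (∀ y ∈ κ '' X, ∃ x ∈ X, (x, y) ∈ R) ∧
            (∀ p ∈ R, f p.1 ∈ X → (f p.1, ghat p.2) ∈ R) ∧
            (∀ p ∈ R, dist p.1 p.2 ≤ ε p.1 p.2) := by
  have hf := uniformEquicontinuousOn_iterate_of_continuity_modulus hα.tendsto_zero hUB
  exact stmt8_general hXcomp (hf.mono hXD).equicontinuousOn htrans hεpos hεcont
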